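/- Let Q_1 = p_1•⋯•p_m and Q_2 = q_1•⋯•q_s be arbitrary generalized subsequences over Σ (not necessarily over disjoint sets of letters). Then for every word w over Σ: |w|_{Q_1} · |w|_{Q_2} ≥ Σ_{X ∈ Q_1⧢Q_2} |w|_X, where the sum ranges over the ground shuffle of Q_1 and Q_2. -/

import Mathlib

/-- Number of occurrences of the generalized subsequence with factor list `Q` in the word `w`.
The empty sequence of factors has exactly one occurrence in every word. -/
def gsCount {α : Type*} [DecidableEq α] : List (List α) → List α → ℕ
  | [], _ => 1
  | q :: Q, w =>
      ∑ i ∈ Finset.range (w.length + 1 - q.length),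
        if (w.drop i).take q.length = q then gsCount Q (w.drop (i + q.length)) else 0

/-- Scattered-subword count `C(w, u)`: the number of occurrences of `u` as a
scattered subword (subsequence) of `w`. -/
def sCount {α : Type*} [DecidableEq α] : List α → List α → ℕ
  | _, [] => 1
  | [], _ :: _ => 0
  | a :: w, b :: u => sCount w (b :: u) + (if a = b then sCount w u else 0)

/-- All interleavings (ground shuffle) of two sequences, each interleaving appearing
once for each choice of which positions come from the first sequence. -/
def shuffles {β : Type*} : List β → List β → List (List β)
  | [], ys => [ys]
  | x :: xs, [] => [x :: xs]
  | x :: xs, y :: ys =>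
      ((shuffles xs (y :: ys)).map fun z => x :: z) ++
      ((shuffles (x :: xs) ys).map fun z => y :: z)
termination_by xs ys => xs.length + ys.length

theorem gs_nil {α : Type*} [DecidableEq α] (w : List α) : gsCount [] w = 1 := by
  simp [gsCount]

theorem gs_cons_nil {α : Type*} [DecidableEq α] (q : List α) (Q : List (List α)) (hq : q ≠ []) :
    gsCount (q :: Q) [] = 0 := by
  have : 0 < q.length := List.length_pos_iff.2 hq
  have h : ([] : List α).length + 1 - q.length = 0 := by simp; omega
  rw [gsCount, h]; simp

theorem gs_cons_cons {α : Type*} [DecidableEq α] (q : List α) (Q : List (List α))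
    (a : α) (w : List α) :
    gsCount (q :: Q) (a :: w) =
      (if (a :: w).take q.length = q then gsCount Q ((a :: w).drop q.length) else 0)
      + gsCount (q :: Q) w := by
  rw [gsCount, gsCount]
  by_cases h : q.length ≤ w.length + 1
  · have e : (a :: w).length + 1 - q.length = (w.length + 1 - q.length) + 1 := by
      simp; omega
    rw [e, Finset.sum_range_succ', add_comm]
    congr 1
    · simp
    · apply Finset.sum_congr rfl
      intro i _
      have : i + 1 + q.length = (i + q.length) + 1 := by omega
      rw [this]; simp only [List.drop_succ_cons]
  · have e : (a :: w).length + 1 - q.length = 0 := by simp; omega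
    have e' : w.length + 1 - q.length = 0 := by omega
    rw [e, e', if_neg]
    · simp
    · intro h'
      have := congrArg List.length h'
      simp at this; omega

theorem gs_tail_le {α : Type*} [DecidableEq α] (Q : List (List α)) (a : α) (w : List α) :
    gsCount Q w ≤ gsCount Q (a :: w) := by
  cases Q with
  | nil => simp [gs_nil]
  | cons q Q => rw [gs_cons_cons]; omega

theorem gs_drop_le {α : Type*} [DecidableEq α] (Q : List (List α)) (w : List α) :
    ∀ n, gsCount Q (w.drop n) ≤ gsCount Q w := by
  induction w with
  | nil => simp
  | cons a w ih =>
    intro n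
    cases n with
    | zero => simp
    | succ n => exact (ih n).trans (gs_tail_le Q a w)

theorem gs_drop_le' {α : Type*} [DecidableEq α] (Q : List (List α)) (a : α) (w q : List α)
    (hq : q ≠ []) : gsCount Q ((a :: w).drop q.length) ≤ gsCount Q w := by
  cases q with
  | nil => exact absurd rfl hq
  | cons b q => exact gs_drop_le Q w _

theorem sum_nil {α : Type*} [DecidableEq α] (q : List α) (hq : q ≠ [])
    (L : List (List (List α))) :
    ((L.map fun z => q :: z).map fun X => gsCount X []).sum = 0 := by
  induction L with
  | nil => simp
  | cons x L ih => simp only [List.map_cons, List.sum_cons, ih, gs_cons_nil q x hq]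

theorem sum_cons {α : Type*} [DecidableEq α] (q : List α) (a : α) (w : List α)
    (L : List (List (List α))) :
    ((L.map fun z => q :: z).map fun X => gsCount X (a :: w)).sum =
      (if (a :: w).take q.length = q then
        (L.map fun X => gsCount X ((a :: w).drop q.length)).sum else 0)
      + ((L.map fun z => q :: z).map fun X => gsCount X w).sum := by
  induction L with
  | nil => simp
  | cons x L ih =>
    simp only [List.map_cons, List.sum_cons, ih, gs_cons_cons]
    split_ifs <;> omega

theorem shuffle_le {α : Type*} [DecidableEq α] (n : ℕ) : ∀ (w : List α), w.length ≤ n →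
    ∀ (Q1 Q2 : List (List α)), (∀ q ∈ Q1, q ≠ []) → (∀ q ∈ Q2, q ≠ []) →
    ((shuffles Q1 Q2).map fun X => gsCount X w).sum ≤ gsCount Q1 w * gsCount Q2 w := by
  induction n with
  | zero =>
    intro w hw Q1 Q2 h1 h2
    obtain rfl : w = [] := List.length_eq_zero_iff.1 (by omega)
    match Q1, Q2 with
    | [], Q => simp [shuffles, gs_nil]
    | p :: P, [] => simp [shuffles, gs_nil]
    | p :: P, q :: Q =>
      rw [shuffles, List.map_append, List.sum_append, sum_nil p (h1 p (by simp)),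
        sum_nil q (h2 q (by simp))]
      simp
  | succ n ih =>
    intro w hw Q1 Q2 h1 h2
    match Q1, Q2, w with
    | [], Q, _ => simp [shuffles, gs_nil]
    | p :: P, [], _ => simp [shuffles, gs_nil]
    | p :: P, q :: Q, [] => exact ih [] (by simp) _ _ h1 h2
    | p :: P, q :: Q, a :: w =>
      have hp := h1 p (by simp)
      have hq := h2 q (by simp)
      have hw' : w.length ≤ n := by simpa using hw
      have lp : 0 < p.length := List.length_pos_iff.2 hp
      have lq : 0 < q.length := List.length_pos_iff.2 hq
      have i0 := ih w hw' _ _ h1 h2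
      have i1 := ih ((a :: w).drop p.length) (by simp; omega) P (q :: Q)
        (fun x hx => h1 x (by simp [hx])) h2
      have i2 := ih ((a :: w).drop q.length) (by simp; omega) (p :: P) Q
        h1 (fun x hx => h2 x (by simp [hx]))
      replace i1 := i1.trans (Nat.mul_le_mul_left _ (gs_drop_le' (q :: Q) a w p hp))
      replace i2 := i2.trans (Nat.mul_le_mul_right _ (gs_drop_le' (p :: P) a w q hq))
      rw [shuffles, List.map_append, List.sum_append] at i0 ⊢
      rw [sum_cons, sum_cons, gs_cons_cons p, gs_cons_cons q]
      split_ifs <;> nlinarith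

theorem stmt11 {α : Type*} [Fintype α] [DecidableEq α]
    (Q1 Q2 : List (List α))
    (h1 : Q1 ≠ []) (h1' : ∀ q ∈ Q1, q ≠ [])
    (h2 : Q2 ≠ []) (h2' : ∀ q ∈ Q2, q ≠ [])
    (w : List α) :
    ((shuffles Q1 Q2).map fun X => gsCount X w).sum ≤
      gsCount Q1 w * gsCount Q2 w := by
  exact shuffle_le w.length w le_rfl Q1 Q2 h1' h2'
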